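/- arXiv:1605.02582 — 2 statements merged into one kernel-verified Lean document; each statement's English description precedes it below -/
import Mathlib

section
/- Let P, C, D be points of the Euclidean plane with ⟪D - P, C - P⟫ < 0, let A := 2 • P - C, and let B := P + (2 * ⟪D - P, C - P⟫ / ‖D - P‖²) • (D - P). If dist(A, D) = dist(A, P), then B - A = C - D; that is, if D lies on the circle of center A and radius dist(A, P), then the quadrilateral ABCD is a parallelogram. -/
open RealInnerProductSpace

/-!
The half-turn about `P` carries the circle with center `A` through `P` to the circle with center `C`
through `P`. So if `D` is on the former, its image is on the latter; as the image also lies on the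
line `PD`, it is the second intersection `B`. Thus `P` is the midpoint of both diagonals.
-/

open Equiv EuclideanGeometry

theorem pointReflection_vsub_pointReflection {G P : Type*} [AddCommGroup G] [AddTorsor G P]
    (p x y : P) : pointReflection p x -ᵥ pointReflection p y = y -ᵥ x := by
  rw [pointReflection_apply, pointReflection_apply, vadd_vsub_vadd_cancel_right,
    vsub_sub_vsub_cancel_left]

theorem pointReflection_mem_affineSpan_pair (k : Type*) {V P : Type*} [Ring k] [AddCommGroup V]
    [Module k V] [AddTorsor V P] (p q : P) : pointReflection p q ∈ line[k, p, q] := by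
  rw [pointReflection_apply, ← neg_vsub_eq_vsub_rev, ← neg_one_smul k]
  exact smul_vsub_vadd_mem_affineSpan_pair _ _ _

theorem secondInter_vsub_eq_pointReflection_iff {V P : Type*} [NormedAddCommGroup V]
    [InnerProductSpace ℝ V] [MetricSpace P] [NormedAddTorsor V P] {s : Sphere P} {p q : P}
    (hp : p ∈ s) :
    s.secondInter p (q -ᵥ p) = pointReflection p q ↔ pointReflection p q ∈ s := by
  rw [← s.eq_or_eq_secondInter_iff_mem_of_mem_affineSpan_pair hp
    (pointReflection_mem_affineSpan_pair ℝ p q)]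
  refine ⟨fun h ↦ .inr h.symm, ?_⟩
  rintro (reflection_eq_left | reflection_eq_secondInter)
  · obtain rfl : q = p :=
      (pointReflection p).injective (reflection_eq_left.trans (pointReflection_self p).symm)
    rw [vsub_self, Sphere.secondInter_zero, pointReflection_self]
  · exact reflection_eq_secondInter.symm

theorem secondInter_sub_eq_add_smul {V : Type*} [NormedAddCommGroup V] [InnerProductSpace ℝ V]
    (s : Sphere V) (p q : V) :
    s.secondInter p (q - p) =
      p + (2 * ⟪q - p, s.center - p⟫ / ‖q - p‖ ^ 2) • (q - p) := by
  rw [Sphere.secondInter, vsub_eq_sub, vadd_eq_add, add_comm, ← neg_sub s.center p,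
    inner_neg_right, neg_mul_neg, real_inner_self_eq_norm_sq]

theorem parallelogram_of_D_on_circle_general {V : Type*} [NormedAddCommGroup V]
    [InnerProductSpace ℝ V] {P C D A B : V} (hA : A = (2 : ℝ) • P - C)
    (hB : B = P + (2 * ⟪D - P, C - P⟫ / ‖D - P‖ ^ 2) • (D - P))
    (hAD : dist A D = dist A P) :
    B - A = C - D := by
  let s : Sphere V := ⟨C, dist P C⟩
  have A_eq : A = pointReflection P C := by
    rw [hA, pointReflection_apply, vsub_eq_sub, vadd_eq_add]
    module
  have reflection_mem : pointReflection P D ∈ s := by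
    calc dist (pointReflection P D) C
      _ = dist (pointReflection P D) (pointReflection P A) := by
        rw [A_eq, pointReflection_involutive]
      _ = dist D A := (AffineIsometryEquiv.pointReflection ℝ P).dist_map D A
      _ = dist P A := by rw [dist_comm, hAD, dist_comm]
      _ = dist P C := by rw [A_eq, dist_comm, dist_pointReflection_left]
  have B_eq : B = pointReflection P D := by
    rw [hB, ← secondInter_sub_eq_add_smul s]
    exact (secondInter_vsub_eq_pointReflection_iff rfl).mpr reflection_mem
  rw [A_eq, B_eq]
  exact pointReflection_vsub_pointReflection P D C

theorem parallelogram_of_D_on_circle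
    (P C D : EuclideanSpace ℝ (Fin 2)) (h : ⟪D - P, C - P⟫ < 0)
    (A B : EuclideanSpace ℝ (Fin 2))
    (hA : A = (2 : ℝ) • P - C)
    (hB : B = P + (2 * ⟪D - P, C - P⟫ / ‖D - P‖ ^ 2) • (D - P))
    (hAD : dist A D = dist A P) :
    B - A = C - D :=
  parallelogram_of_D_on_circle_general hA hB hAD
end

section
/- Let P, C, D be points of the Euclidean plane with ⟪D - P, C - P⟫ < 0, let A := 2 • P - C, and let B := P + (2 * ⟪D - P, C - P⟫ / ‖D - P‖²) • (D - P). If B - A = C - D (i.e. ABCD is a parallelogram), then dist(A, D) = dist(A, P); that is, D necessarily lies on the circle of center A passing through P. -/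
/-! The side `DA` is equal to the opposite side `CB` of the parallelogram, hence to the radius `CP`
of the circle centred at `C`, and `CP = PA` because `P` is the midpoint of `AC`. -/

open RealInnerProductSpace

section NormedAddTorsor

variable {V E : Type*} [SeminormedAddCommGroup V] [PseudoMetricSpace E] [NormedAddTorsor V E]

theorem dist_eq_dist_of_vsub_eq_vsub {a b c d : E} (h : b -ᵥ a = c -ᵥ d) :
    dist a d = dist b c := by
  have opposite_sides : a -ᵥ d = b -ᵥ c := by
    rw [← sub_eq_zero, vsub_sub_vsub_comm, sub_eq_zero, ← neg_vsub_eq_vsub_rev b a, h,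
      neg_vsub_eq_vsub_rev]
  rw [dist_eq_norm_vsub V, dist_eq_norm_vsub V, opposite_sides]

theorem D_on_circle_of_parallelogram_general {P A B C D : E}
    (hA : A = Equiv.pointReflection P C) (hB : dist B C = dist P C)
    (hpar : B -ᵥ A = C -ᵥ D) : dist A D = dist A P :=
  calc
    dist A D = dist B C := dist_eq_dist_of_vsub_eq_vsub hpar
    _ = dist P C := hB
    _ = dist A P := by rw [hA, dist_pointReflection_left]

end NormedAddTorsor

theorem two_smul_sub_eq_pointReflection (R : Type*) {V : Type*} [Semiring R] [AddCommGroup V]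
    [Module R V] (x y : V) : (2 : R) • x - y = Equiv.pointReflection x y := by
  rw [Equiv.pointReflection_apply, vsub_eq_sub, vadd_eq_add, two_smul, add_sub_right_comm]

section EuclideanGeometry

variable {V E : Type*} [NormedAddCommGroup V] [InnerProductSpace ℝ V] [MetricSpace E]
  [NormedAddTorsor V E]

theorem secondInter_eq_smul_vadd (s : EuclideanGeometry.Sphere E) (p : E) (v : V) :
    s.secondInter p v = (2 * ⟪v, s.center -ᵥ p⟫ / ‖v‖ ^ 2) • v +ᵥ p := by
  rw [EuclideanGeometry.Sphere.secondInter, ← neg_vsub_eq_vsub_rev s.center p, inner_neg_right,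
    neg_mul_neg, real_inner_self_eq_norm_sq]

theorem dist_inner_div_smul_vadd (p c : E) (v : V) :
    dist ((2 * ⟪v, c -ᵥ p⟫ / ‖v‖ ^ 2) • v +ᵥ p) c = dist p c := by
  let circle : EuclideanGeometry.Sphere E := ⟨c, dist p c⟩
  rw [← secondInter_eq_smul_vadd circle p v]
  exact circle.secondInter_dist p v

end EuclideanGeometry

theorem D_on_circle_of_parallelogram
    (P C D : EuclideanSpace ℝ (Fin 2)) (h : ⟪D - P, C - P⟫ < 0)
    (A B : EuclideanSpace ℝ (Fin 2))
    (hA : A = (2 : ℝ) • P - C)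
    (hB : B = P + (2 * ⟪D - P, C - P⟫ / ‖D - P‖ ^ 2) • (D - P))
    (hpar : B - A = C - D) :
    dist A D = dist A P := by
  have B_on_circle : dist B C = dist P C := by
    rw [hB, add_comm]
    exact dist_inner_div_smul_vadd P C (D - P)
  exact D_on_circle_of_parallelogram_general
    (hA.trans (two_smul_sub_eq_pointReflection ℝ P C)) B_on_circle hpar
end
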